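/- Let (μ,K) ∈ ℚ_{>0} × ℕ* with K ∈ μℕ*, let λ ∈ ℂ* and n ∈ ℕ. Then for every z ∈ ℂ* with z ∉ −λq^{K^{−1}ℤ} := {−λq^{j/K} : j ∈ ℤ}, the series (μ/K) · q^{−n(n−1)/(2μ)} · Σ_{ℓ∈K^{−1}ℤ} (q^ℓ λ)^n / Θ_{q^{1/μ}}(q^{1/μ+ℓ} λ / z) converges absolutely and its sum equals z^n. Equivalently, L^{[λ]}_{μ,K}(B̂_μ(z^n)) = z^n; in particular (case n = 0) L^{[λ]}_{μ,K}(1) = 1. -/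

import Mathlib

/-- The Jacobi theta function `Θ_q(z) = ∑_{ℓ ∈ ℤ} q^{-ℓ(ℓ+1)/2} z^ℓ`. -/
noncomputable def theta (q z : ℂ) : ℂ := ∑' ℓ : ℤ, q ^ (-(ℓ * (ℓ + 1) / 2)) * z ^ ℓ

/-- Rational powers `q^α := exp(α log q)` of a complex number, via the principal logarithm. -/
noncomputable def qpow (q : ℂ) (α : ℚ) : ℂ := Complex.exp ((α : ℂ) * Complex.log q)

/-!
Write `p = q^{1/μ}`. The functional equation `Θ_p(p^a x) = p^{a(a-1)/2} x^a Θ_p(x)` turns the sum of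
`y ^ n / Θ_p(p y)` over the spiral `y ∈ p^ℤ x` into the reversed series of `Θ_p(x)` divided by
`Θ_p(x)`, so that sum is `p^{n(n-1)/2}` whatever `x` is. Since `K = μ m`, the finer spiral
`q^{K⁻¹ℤ} x` is the disjoint union of `m` spirals of ratio `p`, and `m` is cancelled by `μ / K`.
The division requires `Θ_p` to vanish only on `-p^ℤ`; this is read off Jacobi's triple product,
obtained as the limit of the `q`-binomial theorem for `(1 + Q^{1-N} z) ⋯ (1 + Q^N z)`, `Q = p⁻¹`.
-/

section Triangular

/-- The triangular number `l (l + 1) / 2`, the exponent in the theta series, for `l` of any sign. -/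
def triangular (l : ℤ) : ℤ := l * (l + 1) / 2

lemma two_mul_triangular (l : ℤ) : 2 * triangular l = l * (l + 1) :=
  Int.mul_ediv_cancel' (Int.even_mul_succ_self l).two_dvd

lemma triangular_add (a b : ℤ) : triangular (a + b) = triangular a + triangular b + a * b := by
  linarith [two_mul_triangular a, two_mul_triangular b, two_mul_triangular (a + b)]

lemma triangular_neg (a : ℤ) : triangular (-a) = triangular (a - 1) := by
  linarith [two_mul_triangular (-a), two_mul_triangular (a - 1)]

lemma triangular_succ (a : ℤ) : triangular (a + 1) = triangular a + a + 1 := by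
  linarith [two_mul_triangular a, two_mul_triangular (a + 1)]

end Triangular

section QBinomial

variable {R : Type*} [CommRing R]

/-- The finite `q`-Pochhammer symbol `(a; Q)_n = (1 - a) (1 - a Q) ⋯ (1 - a Q ^ (n - 1))`. -/
def qPochhammer (a Q : R) (n : ℕ) : R := ∏ k ∈ Finset.range n, (1 - a * Q ^ k)

lemma qPochhammer_succ (a Q : R) (n : ℕ) :
    qPochhammer a Q (n + 1) = qPochhammer a Q n * (1 - a * Q ^ n) :=
  Finset.prod_range_succ _ _

lemma qPochhammer_add (a Q : R) (m n : ℕ) :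
    qPochhammer a Q (m + n) = qPochhammer a Q m * qPochhammer (a * Q ^ m) Q n := by
  simp only [qPochhammer, Finset.prod_range_add, pow_add, mul_assoc]

lemma one_sub_mul_pow_ne_zero {x : R} (hx : ¬IsOfFinOrder x) (k : ℕ) : 1 - x * x ^ k ≠ 0 := fun h =>
  hx (isOfFinOrder_iff_pow_eq_one.2 ⟨k + 1, k.succ_pos, by rw [pow_succ', ← sub_eq_zero.1 h]⟩)

variable {F : Type*} [Field F] {Q : F}

/-- The reciprocal `1 / (Q; Q)_k`, extended by `0` to negative `k` so that the recurrence
`qPochhammerInv_sub_one` holds on all of `ℤ`. -/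
def qPochhammerInv (Q : F) (k : ℤ) : F := if 0 ≤ k then (qPochhammer Q Q k.toNat)⁻¹ else 0

lemma qPochhammerInv_natCast (Q : F) (n : ℕ) : qPochhammerInv Q n = (qPochhammer Q Q n)⁻¹ := by
  simp [qPochhammerInv]

lemma qPochhammerInv_of_neg (Q : F) {k : ℤ} (hk : k < 0) : qPochhammerInv Q k = 0 :=
  if_neg hk.not_ge

lemma qPochhammerInv_sub_one (hQ : ¬IsOfFinOrder Q) (k : ℤ) :
    qPochhammerInv Q (k - 1) = (1 - Q ^ k) * qPochhammerInv Q k := by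
  rcases lt_trichotomy k 0 with hk | rfl | hk
  · rw [qPochhammerInv_of_neg Q hk, qPochhammerInv_of_neg Q (by lia), mul_zero]
  · simp [qPochhammerInv_of_neg]
  · obtain ⟨n, rfl⟩ : ∃ n : ℕ, k = (n + 1 : ℕ) := ⟨(k - 1).toNat, by lia⟩
    rw [show ((n + 1 : ℕ) : ℤ) - 1 = n by lia, qPochhammerInv_natCast, qPochhammerInv_natCast,
      qPochhammer_succ, zpow_natCast, pow_succ', mul_inv_rev,
      mul_inv_cancel_left₀ (one_sub_mul_pow_ne_zero hQ n)]

/-- The Gaussian binomial coefficient `(Q; Q)_n / ((Q; Q)_k (Q; Q)_{n - k})`; it vanishes unless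
`0 ≤ k ≤ n`. -/
def qBinomial (Q : F) (n : ℕ) (k : ℤ) : F :=
  qPochhammer Q Q n * qPochhammerInv Q k * qPochhammerInv Q (n - k)

lemma qBinomial_zero (Q : F) (k : ℤ) : qBinomial Q 0 k = if k = 0 then 1 else 0 := by
  rcases lt_trichotomy k 0 with hk | rfl | hk
  · simp [qBinomial, qPochhammerInv_of_neg Q hk, hk.ne]
  · simp [qBinomial, qPochhammerInv, qPochhammer]
  · simp [qBinomial, qPochhammerInv_of_neg Q (neg_lt_zero.2 hk), hk.ne']

lemma qBinomial_succ (hQ0 : Q ≠ 0) (hQ : ¬IsOfFinOrder Q) (n : ℕ) (k : ℤ) :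
    qBinomial Q (n + 1) k = qBinomial Q n k + Q ^ (n + 1 - k) * qBinomial Q n (k - 1) := by
  have hupper : (n : ℤ) - k = n + 1 - k - 1 := by ring
  have hlower : (n : ℤ) - (k - 1) = n + 1 - k := by ring
  have hpow : Q ^ ((n : ℤ) + 1 - k) * Q ^ k = Q * Q ^ n := by
    rw [← zpow_add₀ hQ0, sub_add_cancel, zpow_add_one₀ hQ0, zpow_natCast, mul_comm]
  simp only [qBinomial]
  push_cast
  rw [hlower, hupper, qPochhammerInv_sub_one hQ, qPochhammerInv_sub_one hQ, qPochhammer_succ]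
  linear_combination (qPochhammer Q Q n * qPochhammerInv Q k * qPochhammerInv Q (n + 1 - k)) * hpow

theorem hasSum_qBinomial [TopologicalSpace F] [IsTopologicalRing F] (hQ0 : Q ≠ 0)
    (hQ : ¬IsOfFinOrder Q) {x : F} (hx : x ≠ 0) (n : ℕ) :
    HasSum (fun k : ℤ => qBinomial Q n k * Q ^ triangular (k - 1) * x ^ k)
      (qPochhammer (-x) Q n) := by
  induction n with
  | zero =>
    convert hasSum_ite_eq (0 : ℤ) (1 : F) using 2 with k
    · rcases eq_or_ne k 0 with rfl | hk
      · simp [qBinomial_zero, triangular]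
      · simp [qBinomial_zero, hk]
    · simp [qPochhammer]
  | succ n ih =>
    have hshift := ((Equiv.subRight (1 : ℤ)).hasSum_iff.2 ih).mul_left (Q ^ n * x)
    rw [qPochhammer_succ, show qPochhammer (-x) Q n * (1 - -x * Q ^ n) =
      qPochhammer (-x) Q n + Q ^ n * x * qPochhammer (-x) Q n by ring]
    refine (ih.add hshift).congr_fun fun k => ?_
    have htri := triangular_succ (k - 1 - 1)
    rw [sub_add_cancel] at htri
    have hexp : Q ^ ((n : ℤ) + 1 - k) * Q ^ triangular (k - 1) =
        Q ^ n * Q ^ triangular (k - 1 - 1) := by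
      rw [← zpow_natCast, ← zpow_add₀ hQ0, ← zpow_add₀ hQ0]
      congr 1
      linarith
    have hx' : x ^ k = x ^ (k - 1) * x := by rw [← zpow_add_one₀ hx, sub_add_cancel]
    simp only [Function.comp_apply, Equiv.subRight_apply]
    rw [qBinomial_succ hQ0 hQ]
    linear_combination (qBinomial Q n (k - 1) * x ^ k) * hexp +
      (qBinomial Q n (k - 1) * Q ^ n * Q ^ triangular (k - 1 - 1)) * hx'

lemma qPochhammer_neg_inv (hQ0 : Q ≠ 0) {z : F} (hz : z ≠ 0) (N : ℕ) :
    qPochhammer (-(Q ^ (1 - N : ℤ) * z)) Q N =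
      Q ^ (-triangular (N - 1)) * z ^ N * qPochhammer (-z⁻¹) Q N := by
  induction N with
  | zero => simp [qPochhammer, triangular]
  | succ N ih =>
    have hratio : -(Q ^ (1 - (N + 1 : ℕ) : ℤ) * z) * Q ^ 1 = -(Q ^ (1 - N : ℤ) * z) := by
      push_cast
      rw [pow_one, show (1 : ℤ) - N = 1 - (N + 1) + 1 by ring, zpow_add_one₀ hQ0]
      ring
    have htri : -triangular ((N + 1 : ℕ) - 1) = -triangular (N - 1) + -N := by
      have h := triangular_succ ((N : ℤ) - 1)
      rw [sub_add_cancel] at h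
      push_cast
      rw [add_sub_cancel_right]
      linarith
    have hfirst : qPochhammer (-(Q ^ (1 - (N + 1 : ℕ) : ℤ) * z)) Q 1 =
        Q ^ (-N : ℤ) * z * (1 - -z⁻¹ * Q ^ N) := by
      have hQN : Q ^ (-N : ℤ) * Q ^ N = 1 := by
        rw [← zpow_natCast, ← zpow_add₀ hQ0, neg_add_cancel, zpow_zero]
      simp only [qPochhammer, Finset.prod_range_one, pow_zero]
      push_cast
      rw [show (1 : ℤ) - (N + 1) = -N by ring]
      linear_combination -hQN - Q ^ (-N : ℤ) * Q ^ N * mul_inv_cancel₀ hz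
    rw [add_comm N 1, qPochhammer_add, add_comm 1 N, hratio, hfirst, ih, qPochhammer_succ, htri,
      zpow_add₀ hQ0]
    ring

/-- Jacobi's triple product, truncated: the `q`-binomial theorem for `(1 + Q ^ (1 - N) * z) ⋯
(1 + Q ^ N * z)`, with the summation index shifted by `N`. -/
theorem hasSum_qBinomial_two_mul [TopologicalSpace F] [IsTopologicalRing F] (hQ0 : Q ≠ 0)
    (hQ : ¬IsOfFinOrder Q) {z : F} (hz : z ≠ 0) (N : ℕ) :
    HasSum (fun l : ℤ => qBinomial Q (2 * N) (N + l) * (Q ^ triangular l * z ^ l))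
      (qPochhammer (-(Q * z)) Q N * qPochhammer (-z⁻¹) Q N) := by
  have hx : Q ^ (1 - N : ℤ) * z ≠ 0 := mul_ne_zero (zpow_ne_zero _ hQ0) hz
  have hsum := ((Equiv.addLeft (N : ℤ)).hasSum_iff.2 (hasSum_qBinomial hQ0 hQ hx (2 * N))).mul_left
    (Q ^ triangular (N - 1) * z ^ (-N : ℤ))
  have hprod : Q ^ triangular (N - 1) * z ^ (-N : ℤ) *
      qPochhammer (-(Q ^ (1 - N : ℤ) * z)) Q (2 * N) =
        qPochhammer (-(Q * z)) Q N * qPochhammer (-z⁻¹) Q N := by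
    have hratio : -(Q ^ (1 - N : ℤ) * z) * Q ^ N = -(Q * z) := by
      rw [zpow_sub₀ hQ0, zpow_one, zpow_natCast]
      field_simp
    rw [two_mul, qPochhammer_add, hratio, qPochhammer_neg_inv hQ0 hz, zpow_neg, zpow_neg,
      zpow_natCast]
    field_simp
  rw [hprod] at hsum
  refine hsum.congr_fun fun l => ?_
  have hexp : Q ^ triangular l =
      Q ^ triangular (N - 1) * (Q ^ triangular (N + l - 1) * Q ^ ((1 - N) * (N + l) : ℤ)) := by
    rw [← zpow_add₀ hQ0, ← zpow_add₀ hQ0]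
    congr 1
    linarith [two_mul_triangular l, two_mul_triangular (N - 1), two_mul_triangular (N + l - 1)]
  have hzl : z ^ l = z ^ (-N : ℤ) * z ^ (N + l : ℤ) := by
    rw [← zpow_add₀ hz, neg_add_cancel_left]
  simp only [Function.comp_apply, Equiv.coe_addLeft]
  rw [hexp, hzl, mul_zpow, ← zpow_mul]
  ring

end QBinomial

section TripleProduct

open Filter Topology

variable {𝕜 : Type*} [NormedField 𝕜] {Q : 𝕜}

lemma not_isOfFinOrder_of_norm_lt_one (hQ : ‖Q‖ < 1) : ¬IsOfFinOrder Q :=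
  fun h => hQ.ne h.norm_eq_one

lemma summable_norm_pow_triangular_mul_pow (hQ : ‖Q‖ < 1) (z : 𝕜) :
    Summable fun n : ℕ => ‖Q ^ triangular n * z ^ n‖ := by
  have hratio : Tendsto (fun n : ℕ => ‖Q‖ ^ (n + 1) * ‖z‖) atTop (𝓝 0) := by
    simpa using ((tendsto_pow_atTop_nhds_zero_of_lt_one (norm_nonneg Q) hQ).comp
      (tendsto_add_atTop_nat 1)).mul_const ‖z‖
  refine summable_of_ratio_norm_eventually_le one_half_lt_one ?_
  filter_upwards [hratio.eventually_le_const one_half_pos] with n hn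
  have hstep : Q ^ triangular (n + 1 : ℕ) * z ^ (n + 1) =
      Q ^ (n + 1) * z * (Q ^ triangular n * z ^ n) := by
    have hne : triangular n + (n + 1 : ℕ) ≠ 0 := fun h => by
      push_cast at h
      nlinarith [two_mul_triangular n]
    have htri : triangular (n + 1 : ℕ) = triangular n + (n + 1 : ℕ) := by
      push_cast
      rw [triangular_succ, add_assoc]
    rw [htri, zpow_add' (.inr (.inl hne)), zpow_natCast, pow_succ z]
    ring
  rw [norm_norm, norm_norm, hstep, norm_mul, norm_mul, norm_pow]
  gcongr

lemma summable_norm_zpow_triangular_mul_zpow (hQ : ‖Q‖ < 1) (z : 𝕜) :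
    Summable fun l : ℤ => ‖Q ^ triangular l * z ^ l‖ := by
  refine .of_nat_of_neg_add_one ?_ ?_
  · simpa only [zpow_natCast] using summable_norm_pow_triangular_mul_pow hQ z
  · refine ((summable_norm_pow_triangular_mul_pow hQ z⁻¹).mul_right ‖z⁻¹‖).congr fun n => ?_
    rw [triangular_neg, add_sub_cancel_right, ← norm_mul, mul_assoc, ← pow_succ, inv_pow, zpow_neg]
    norm_cast

/-- The infinite `q`-Pochhammer symbol `(a; Q)_∞`, meaningful for `‖Q‖ < 1`. -/
noncomputable def qPochhammerInf (a Q : 𝕜) : 𝕜 := ∏' k : ℕ, (1 - a * Q ^ k)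

lemma summable_norm_neg_mul_pow (hQ : ‖Q‖ < 1) (a : 𝕜) : Summable fun k : ℕ => ‖-(a * Q ^ k)‖ := by
  simpa only [norm_neg, norm_mul, norm_pow] using
    (summable_geometric_of_lt_one (norm_nonneg Q) hQ).mul_left ‖a‖

variable [CompleteSpace 𝕜]

lemma tendsto_qPochhammer (hQ : ‖Q‖ < 1) (a : 𝕜) :
    Tendsto (qPochhammer a Q) atTop (𝓝 (qPochhammerInf a Q)) := by
  have hmul : Multipliable fun k : ℕ => 1 - a * Q ^ k := by
    simpa only [sub_eq_add_neg] using
      multipliable_one_add_of_summable (summable_norm_neg_mul_pow hQ a)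
  exact hmul.tendsto_prod_tprod_nat

lemma qPochhammerInf_ne_zero (hQ : ‖Q‖ < 1) {a : 𝕜} (ha : ∀ k : ℕ, 1 - a * Q ^ k ≠ 0) :
    qPochhammerInf a Q ≠ 0 := by
  simp only [qPochhammerInf, sub_eq_add_neg] at ha ⊢
  exact tprod_one_add_ne_zero_of_summable ha (summable_norm_neg_mul_pow hQ a)

lemma qPochhammerInf_self_ne_zero (hQ : ‖Q‖ < 1) : qPochhammerInf Q Q ≠ 0 :=
  qPochhammerInf_ne_zero hQ (one_sub_mul_pow_ne_zero (not_isOfFinOrder_of_norm_lt_one hQ))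

lemma tendsto_qPochhammer_inv (hQ : ‖Q‖ < 1) :
    Tendsto (fun n => (qPochhammer Q Q n)⁻¹) atTop (𝓝 (qPochhammerInf Q Q)⁻¹) :=
  (tendsto_qPochhammer hQ Q).inv₀ (qPochhammerInf_self_ne_zero hQ)

lemma tendsto_qPochhammerInv (hQ : ‖Q‖ < 1) :
    Tendsto (qPochhammerInv Q) atTop (𝓝 (qPochhammerInf Q Q)⁻¹) := by
  have hnat : Tendsto Int.toNat atTop atTop :=
    tendsto_atTop_atTop.2 fun b => ⟨b, fun k hk => by lia⟩
  refine ((tendsto_qPochhammer_inv hQ).comp hnat).congr' ?_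
  filter_upwards [eventually_ge_atTop 0] with k hk
  exact (if_pos hk).symm

lemma tendsto_qBinomial_two_mul (hQ : ‖Q‖ < 1) (l : ℤ) :
    Tendsto (fun N : ℕ => qBinomial Q (2 * N) (N + l)) atTop (𝓝 (qPochhammerInf Q Q)⁻¹) := by
  have hshift (c : ℤ) : Tendsto (fun N : ℕ => qPochhammerInv Q (N + c)) atTop
      (𝓝 (qPochhammerInf Q Q)⁻¹) :=
    (tendsto_qPochhammerInv hQ).comp
      (tendsto_atTop_add_const_right _ c tendsto_natCast_atTop_atTop)
  have hnum : Tendsto (fun N : ℕ => qPochhammer Q Q (2 * N)) atTop (𝓝 (qPochhammerInf Q Q)) :=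
    (tendsto_qPochhammer hQ Q).comp (tendsto_id.const_mul_atTop' two_pos)
  have h := (hnum.mul (hshift l)).mul (hshift (-l))
  rw [mul_inv_cancel₀ (qPochhammerInf_self_ne_zero hQ), one_mul] at h
  refine h.congr fun N => ?_
  rw [qBinomial, show ((2 * N : ℕ) : ℤ) - (N + l) = N + -l by push_cast; ring]

lemma exists_norm_qBinomial_le (hQ : ‖Q‖ < 1) : ∃ C, ∀ n k, ‖qBinomial Q n k‖ ≤ C := by
  obtain ⟨A, hA⟩ := (Metric.isBounded_range_of_tendsto _ (tendsto_qPochhammer hQ Q)).exists_norm_le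
  obtain ⟨B, hB⟩ :=
    (Metric.isBounded_range_of_tendsto _ (tendsto_qPochhammer_inv hQ)).exists_norm_le
  rw [Set.forall_mem_range] at hA hB
  have hA0 : 0 ≤ A := (norm_nonneg _).trans (hA 0)
  have hB0 : 0 ≤ B := (norm_nonneg _).trans (hB 0)
  have hinv (k : ℤ) : ‖qPochhammerInv Q k‖ ≤ B := by
    rw [qPochhammerInv]
    split_ifs
    · exact hB _
    · rwa [norm_zero]
  refine ⟨A * B * B, fun n k => ?_⟩
  rw [qBinomial, norm_mul, norm_mul]
  gcongr
  exacts [hA n, hinv k, hinv _]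

theorem jacobi_triple_product (hQ0 : Q ≠ 0) (hQ : ‖Q‖ < 1) {z : 𝕜} (hz : z ≠ 0) :
    ∑' l : ℤ, Q ^ triangular l * z ^ l =
      qPochhammerInf Q Q * (qPochhammerInf (-(Q * z)) Q * qPochhammerInf (-z⁻¹) Q) := by
  obtain ⟨C, hC⟩ := exists_norm_qBinomial_le hQ
  have hsum : Tendsto
      (fun N : ℕ => ∑' l : ℤ, qBinomial Q (2 * N) (N + l) * (Q ^ triangular l * z ^ l)) atTop
      (𝓝 (∑' l : ℤ, (qPochhammerInf Q Q)⁻¹ * (Q ^ triangular l * z ^ l))) := by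
    refine tendsto_tsum_of_dominated_convergence
      ((summable_norm_zpow_triangular_mul_zpow hQ z).mul_left C)
      (fun l => (tendsto_qBinomial_two_mul hQ l).mul_const _) (.of_forall fun N l => ?_)
    rw [norm_mul]
    gcongr
    exact hC _ _
  simp only [(hasSum_qBinomial_two_mul hQ0 (not_isOfFinOrder_of_norm_lt_one hQ) hz _).tsum_eq,
    tsum_mul_left] at hsum
  have hprod := (tendsto_qPochhammer hQ (-(Q * z))).mul (tendsto_qPochhammer hQ (-z⁻¹))
  rw [← tendsto_nhds_unique hsum hprod, mul_inv_cancel_left₀ (qPochhammerInf_self_ne_zero hQ)]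

end TripleProduct

section Theta

lemma ne_zero_of_one_lt_norm {E : Type*} [NormedAddGroup E] {x : E} (hx : 1 < ‖x‖) : x ≠ 0 :=
  norm_pos_iff.1 (zero_lt_one.trans hx)

lemma norm_inv_lt_one {𝕜 : Type*} [NormedDivisionRing 𝕜] {x : 𝕜} (hx : 1 < ‖x‖) : ‖x⁻¹‖ < 1 := by
  rw [norm_inv]
  exact inv_lt_one_of_one_lt₀ hx

variable {q : ℂ}

lemma theta_eq_tsum_inv (q z : ℂ) : theta q z = ∑' l : ℤ, q⁻¹ ^ triangular l * z ^ l := by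
  simp only [theta, triangular, inv_zpow, zpow_neg]

lemma hasSum_theta (hq : 1 < ‖q‖) (z : ℂ) :
    HasSum (fun l : ℤ => q⁻¹ ^ triangular l * z ^ l) (theta q z) := by
  rw [theta_eq_tsum_inv]
  exact (summable_norm_zpow_triangular_mul_zpow (norm_inv_lt_one hq) z).of_norm.hasSum

theorem theta_ne_zero (hq : 1 < ‖q‖) {z : ℂ} (hz : z ≠ 0) (hzq : ∀ k : ℤ, z ≠ -q ^ k) :
    theta q z ≠ 0 := by
  have hq0 := ne_zero_of_one_lt_norm hq
  have hQ := norm_inv_lt_one hq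
  rw [theta_eq_tsum_inv, jacobi_triple_product (inv_ne_zero hq0) hQ hz]
  refine mul_ne_zero (qPochhammerInf_self_ne_zero hQ)
    (mul_ne_zero (qPochhammerInf_ne_zero hQ fun k h => ?_)
      (qPochhammerInf_ne_zero hQ fun k h => ?_))
  · refine hzq (k + 1 : ℕ) ?_
    rw [zpow_natCast]
    rw [inv_pow] at h
    field_simp at h
    linear_combination h
  · refine hzq (-k) ?_
    rw [zpow_neg, zpow_natCast]
    rw [inv_pow] at h
    field_simp at h ⊢
    linear_combination h

theorem theta_zpow_mul (hq0 : q ≠ 0) {z : ℂ} (hz : z ≠ 0) (a : ℤ) :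
    theta q (q ^ a * z) = q ^ triangular (a - 1) * z ^ a * theta q z := by
  rw [theta_eq_tsum_inv, theta_eq_tsum_inv, ← tsum_mul_left, ← (Equiv.addRight a).tsum_eq]
  refine tsum_congr fun l => ?_
  have hexp : q⁻¹ ^ triangular (l + a) * q ^ (a * (l + a)) =
      q ^ triangular (a - 1) * q⁻¹ ^ triangular l := by
    simp only [inv_zpow', ← zpow_add₀ hq0]
    congr 1
    linarith [triangular_add l a, two_mul_triangular a, two_mul_triangular (a - 1)]
  simp only [Equiv.coe_addRight]
  rw [mul_zpow, ← zpow_mul, ← mul_assoc, hexp, zpow_add₀ hz]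
  ring

theorem hasSum_zpow_div_theta (hq : 1 < ‖q‖) {x : ℂ} (hx : x ≠ 0) (hxq : ∀ k : ℤ, x ≠ -q ^ k)
    (n : ℤ) :
    HasSum (fun a : ℤ => (q ^ a * x) ^ n / theta q (q * (q ^ a * x)))
      (q ^ triangular (n - 1)) := by
  have hq0 := ne_zero_of_one_lt_norm hq
  have hθ := theta_ne_zero hq hx hxq
  have hsum := ((Equiv.subLeft (n - 1)).hasSum_iff.2 (hasSum_theta hq x)).mul_left
    (q ^ triangular (n - 1) / theta q x)
  rw [div_mul_cancel₀ _ hθ] at hsum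
  refine hsum.congr_fun fun a => ?_
  have hexp : q ^ (a * n) = q ^ triangular (n - 1) * q⁻¹ ^ triangular (n - 1 - a) *
      q ^ triangular a := by
    simp only [inv_zpow', ← zpow_add₀ hq0]
    congr 1
    linarith [two_mul_triangular (n - 1), two_mul_triangular (n - 1 - a), two_mul_triangular a]
  have hθa : theta q (q * (q ^ a * x)) = q ^ triangular a * x ^ (a + 1) * theta q x := by
    rw [← mul_assoc, ← zpow_one_add₀ hq0, add_comm, theta_zpow_mul hq0 hx, add_sub_cancel_right]
  have hxn : x ^ n = x ^ (n - 1 - a) * x ^ (a + 1) := by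
    rw [← zpow_add₀ hx]
    congr 1
    ring
  simp only [Function.comp_apply, Equiv.subLeft_apply]
  rw [hθa, mul_zpow, ← zpow_mul, hexp, hxn]
  field_simp

end Theta

section Spiral

lemma hasSum_int_of_residues {M : Type*} [AddCommMonoid M] [TopologicalSpace M] [ContinuousAdd M]
    {m : ℕ} [NeZero m] {f : ℤ → M} {g : Fin m → M}
    (h : ∀ b : Fin m, HasSum (fun a : ℤ => f (a * m + (b : ℕ))) (g b)) :
    HasSum f (∑ b, g b) := by
  have hclass (b : Fin m) :
      HasSum (fun j => if (Int.divModEquiv m j).2 = b then f j else 0) (g b) := by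
    have hdm (a : ℤ) : Int.divModEquiv m (a * m + (b : ℕ)) = (a, b) := by
      rw [← Equiv.eq_symm_apply, Int.divModEquiv_symm_apply]
    have hinj : Function.Injective fun a : ℤ => a * m + (b : ℕ) := fun a a' haa' => by
      simpa [hdm] using congrArg (Int.divModEquiv m) haa'
    refine (hinj.hasSum_iff fun j hj => if_neg fun hjb => hj ⟨(Int.divModEquiv m j).1, ?_⟩).1 ?_
    · simpa only [hjb, Int.divModEquiv_symm_apply] using (Int.divModEquiv m).symm_apply_apply j
    · simpa only [Function.comp_def, hdm, if_true] using h b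
  simpa only [Finset.sum_ite_eq, Finset.mem_univ, if_true] using
    hasSum_sum fun b (_ : b ∈ Finset.univ) => hclass b

theorem hasSum_zpow_div_theta_pow {r : ℂ} (hr : 1 < ‖r‖) {m : ℕ} (hm : m ≠ 0) {x : ℂ}
    (hx : x ≠ 0) (hxr : ∀ j : ℤ, x ≠ -r ^ j) (n : ℤ) :
    HasSum (fun j : ℤ => (r ^ j * x) ^ n / theta (r ^ m) (r ^ m * (r ^ j * x)))
      (m * (r ^ m) ^ triangular (n - 1)) := by
  have : NeZero m := ⟨hm⟩
  have hr0 := ne_zero_of_one_lt_norm hr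
  have hrm : 1 < ‖r ^ m‖ := by
    rw [norm_pow]
    exact one_lt_pow₀ hr hm
  have hclass (b : Fin m) : HasSum (fun a : ℤ => (r ^ (a * m + (b : ℕ)) * x) ^ n /
      theta (r ^ m) (r ^ m * (r ^ (a * m + (b : ℕ)) * x))) ((r ^ m) ^ triangular (n - 1)) := by
    have hbx : r ^ (b : ℕ) * x ≠ 0 := mul_ne_zero (pow_ne_zero _ hr0) hx
    have hbxr (k : ℤ) : r ^ (b : ℕ) * x ≠ -(r ^ m) ^ k := fun h => hxr (m * k - (b : ℕ)) <| by
      rw [zpow_sub₀ hr0, zpow_mul, zpow_natCast, zpow_natCast, ← neg_div, ← h,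
        mul_div_cancel_left₀ _ (pow_ne_zero _ hr0)]
    refine (hasSum_zpow_div_theta hrm hbx hbxr n).congr_fun fun a => ?_
    have hsplit : r ^ (a * m + (b : ℕ)) * x = (r ^ m) ^ a * (r ^ (b : ℕ) * x) := by
      rw [zpow_add₀ hr0, mul_comm a, zpow_mul, zpow_natCast, zpow_natCast, mul_assoc]
    rw [hsplit]
  have hsum := hasSum_int_of_residues
    (f := fun j : ℤ => (r ^ j * x) ^ n / theta (r ^ m) (r ^ m * (r ^ j * x))) hclass
  simpa only [Finset.sum_const, Finset.card_univ, Fintype.card_fin, nsmul_eq_mul] using hsum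

theorem hasSum_zpow_div_theta_pow_div {r : ℂ} (hr : 1 < ‖r‖) {m : ℕ} (hm : m ≠ 0) {y z : ℂ}
    (hy : y ≠ 0) (hz : z ≠ 0) (hyz : ∀ j : ℤ, z ≠ -(r ^ j * y)) (n : ℤ) :
    HasSum (fun j : ℤ => (r ^ j * y) ^ n / theta (r ^ m) (r ^ m * r ^ j * y / z))
      (m * (r ^ m) ^ triangular (n - 1) * z ^ n) := by
  have hr0 := ne_zero_of_one_lt_norm hr
  have hxr (j : ℤ) : y / z ≠ -r ^ j := fun h => hyz (-j) <| by
    rw [div_eq_iff hz] at h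
    rw [h, zpow_neg]
    field_simp
  refine ((hasSum_zpow_div_theta_pow hr hm (div_ne_zero hy hz) hxr n).mul_right (z ^ n)).congr_fun
    fun j => ?_
  have harg : r ^ m * r ^ j * y / z = r ^ m * (r ^ j * (y / z)) := by ring
  rw [harg, div_mul_eq_mul_div, ← mul_zpow, mul_assoc (r ^ j), div_mul_cancel₀ y hz]

end Spiral

section QPow

lemma one_lt_norm_qpow {q : ℂ} (hq : 1 < ‖q‖) {α : ℚ} (hα : 0 < α) : 1 < ‖qpow q α‖ := by
  rw [qpow, Complex.norm_exp, Real.one_lt_exp_iff, ← Complex.ofReal_ratCast,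
    Complex.re_ofReal_mul, Complex.log_re]
  exact mul_pos (Rat.cast_pos.2 hα) (Real.log_pos hq)

lemma qpow_intCast_mul (q : ℂ) (k : ℤ) (α : ℚ) : qpow q (k * α) = qpow q α ^ k := by
  rw [qpow, qpow, ← Complex.exp_int_mul]
  push_cast
  rw [mul_assoc]

lemma qpow_neg_mul_sub_one_div (q : ℂ) (n : ℕ) (μ : ℚ) :
    qpow q (-(n * (n - 1) : ℚ) / (2 * μ)) = qpow q (1 / μ) ^ (-triangular (n - 1)) := by
  have htri : 2 * (triangular (n - 1) : ℚ) = (n - 1) * (n - 1 + 1) := by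
    exact_mod_cast two_mul_triangular (n - 1)
  rw [← qpow_intCast_mul]
  congr 1
  push_cast
  linear_combination (1 / (2 * μ)) * htri

end QPow

/-- for `(μ,K) ∈ ℚ_{>0} × ℕ*` with `K ∈ μℕ*`, `λ ∈ ℂ*` and `n ∈ ℕ`, for every
`z ∈ ℂ*` off the spiral `-λq^{K⁻¹ℤ}`, the series defining
`(μ/K) q^{-n(n-1)/(2μ)} ∑_{ℓ∈K⁻¹ℤ} (q^ℓλ)^n / Θ_{q^{1/μ}}(q^{1/μ+ℓ}λ/z)` converges absolutely
and its sum equals `z^n`; i.e. `L^{[λ]}_{μ,K}(B̂_μ(z^n)) = z^n`. -/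
theorem qLaplace_qBorel_monomial (q : ℂ) (hq : 1 < ‖q‖) (μ : ℚ) (hμ : 0 < μ)
    (K : ℕ) (hK : 0 < K) (hKμ : ∃ m : ℕ, 0 < m ∧ (K : ℚ) = μ * m)
    (lam : ℂ) (hlam : lam ≠ 0) (n : ℕ) (z : ℂ) (hz : z ≠ 0)
    (hzs : ∀ j : ℤ, z ≠ -(qpow q ((j : ℚ) / K) * lam)) :
    Summable (fun j : ℤ => ‖(qpow q ((j : ℚ) / K) * lam) ^ n /
      theta (qpow q (1 / μ)) (qpow q (1 / μ + (j : ℚ) / K) * lam / z)‖) ∧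
    ((μ : ℂ) / (K : ℂ)) * qpow q (-(n * (n - 1) : ℚ) / (2 * μ)) *
      ∑' j : ℤ, (qpow q ((j : ℚ) / K) * lam) ^ n /
        theta (qpow q (1 / μ)) (qpow q (1 / μ + (j : ℚ) / K) * lam / z) = z ^ n := by
  obtain ⟨m, hm, hKm⟩ := hKμ
  have hm0 : m ≠ 0 := hm.ne'
  set r := qpow q (1 / K)
  have hr : 1 < ‖r‖ := one_lt_norm_qpow hq (by positivity)
  have hr0 : r ≠ 0 := ne_zero_of_one_lt_norm hr
  have hqr {α : ℚ} (j : ℤ) (hα : α = j * (1 / K)) : qpow q α = r ^ j := by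
    rw [hα, qpow_intCast_mul]
  have hp : qpow q (1 / μ) = r ^ m := by
    rw [hqr m (by rw [hKm]; push_cast; field_simp), zpow_natCast]
  have hspiral (j : ℤ) : qpow q (j / K) = r ^ j := hqr j (by ring)
  have hshift (j : ℤ) : qpow q (1 / μ + j / K) = r ^ m * r ^ j := by
    rw [hqr (m + j) (by rw [hKm]; push_cast; field_simp), zpow_add₀ hr0, zpow_natCast]
  have hμK : (μ : ℂ) / K = (m : ℂ)⁻¹ := by
    have hrat : μ / K = (m : ℚ)⁻¹ := by rw [hKm]; field_simp
    simpa using congrArg (Rat.cast : ℚ → ℂ) hrat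
  simp only [hspiral] at hzs
  have hsum := hasSum_zpow_div_theta_pow_div hr hm0 hlam hz hzs n
  simp only [zpow_natCast] at hsum
  simp only [hspiral, hshift, qpow_neg_mul_sub_one_div, hp, hμK]
  refine ⟨hsum.summable.norm, ?_⟩
  rw [hsum.tsum_eq, zpow_neg]
  field_simp
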